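/- Assume that ⟨⟨h_n, K_n⟩ : n ∈ ω⟩ is a Knaster-Reichbach system on the Cantor set 2^ω. Then there exists a homeomorphism h : 2^ω → 2^ω extending ⋃_{n∈ω} h_n. -/

import Mathlib

/-- `𝒱` is a partition of `A` into non-empty clopen subsets of `ℕ → Bool`. -/
def IsClopenPartition (A : Set (ℕ → Bool)) (𝒱 : Set (Set (ℕ → Bool))) : Prop :=
  (∀ U ∈ 𝒱, IsClopen U ∧ U.Nonempty) ∧ 𝒱.PairwiseDisjoint id ∧ ⋃₀ 𝒱 = A

/-- `⟨𝒱, 𝒲, ψ⟩` is a Knaster-Reichbach cover for `⟨2^ω \ E, 2^ω \ F, h⟩`. -/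
def IsKRCover (E F : Set (ℕ → Bool)) (h : E ≃ₜ F)
    (𝒱 𝒲 : Set (Set (ℕ → Bool))) (ψ : Set (ℕ → Bool) → Set (ℕ → Bool)) : Prop :=
  IsClopenPartition Eᶜ 𝒱 ∧ IsClopenPartition Fᶜ 𝒲 ∧ Set.BijOn ψ 𝒱 𝒲 ∧
    ∀ f : (ℕ → Bool) ≃ (ℕ → Bool),
      (∀ x : E, f (x : ℕ → Bool) = ((h x : F) : ℕ → Bool)) →
      (∀ U ∈ 𝒱, f '' U = ψ U) →
      (∀ x ∈ E, ContinuousAt f x) ∧ (∀ y ∈ F, ContinuousAt f.symm y)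

/-- `⟨⟨h_n, ⟨𝒱_n, 𝒲_n, ψ_n⟩⟩ : n ∈ ω⟩` is a Knaster-Reichbach system with
respect to an admissible metric `m` on `2^ω`: each `h n : E n → F n` is a
homeomorphism between closed nowhere dense subsets of `2^ω`; the `h n` form an
increasing (as graphs) sequence; each `⟨𝒱 n, 𝒲 n, ψ n⟩` is a KR-cover for
`⟨2^ω \ E n, 2^ω \ F n, h n⟩`; the meshes of `𝒱 n` and `𝒲 n` are at most
`2⁻ⁿ`; the partitions refine each other coherently with the `ψ n`. -/
def IsKRSystem (m : MetricSpace (ℕ → Bool))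
    (E F : ℕ → Set (ℕ → Bool)) (h : ∀ n, E n ≃ₜ F n)
    (𝒱 𝒲 : ℕ → Set (Set (ℕ → Bool)))
    (ψ : ℕ → Set (ℕ → Bool) → Set (ℕ → Bool)) : Prop :=
  (∀ n, IsClosed (E n) ∧ IsNowhereDense (E n) ∧ IsClosed (F n) ∧ IsNowhereDense (F n)) ∧
  (∀ k n, k ≤ n → E k ⊆ E n) ∧
  (∀ k n, k ≤ n → ∀ (x : ℕ → Bool) (hk : x ∈ E k) (hn : x ∈ E n),
    (((h k) ⟨x, hk⟩ : F k) : ℕ → Bool) = (((h n) ⟨x, hn⟩ : F n) : ℕ → Bool)) ∧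
  (∀ n, IsKRCover (E n) (F n) (h n) (𝒱 n) (𝒲 n) (ψ n)) ∧
  (∀ n, ∀ U ∈ 𝒱 n, @Metric.diam _ m.toPseudoMetricSpace U ≤ (2 : ℝ)⁻¹ ^ n) ∧
  (∀ n, ∀ U ∈ 𝒲 n, @Metric.diam _ m.toPseudoMetricSpace U ≤ (2 : ℝ)⁻¹ ^ n) ∧
  (∀ k n, n ≤ k → ∀ U ∈ 𝒱 k, ∃ V ∈ 𝒱 n, U ⊆ V) ∧
  (∀ k n, n ≤ k → ∀ U ∈ 𝒲 k, ∃ V ∈ 𝒲 n, U ⊆ V) ∧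
  (∀ k n, n ≤ k → ∀ U ∈ 𝒱 k, ∀ V ∈ 𝒱 n, (U ⊆ V ↔ ψ k U ⊆ ψ n V))

open Set Filter Topology

/-- Nonempty open subsets of the Cantor set are equipotent. -/
lemma kr_open_bij {U W : Set (ℕ → Bool)} (hU : IsOpen U) (hUn : U.Nonempty)
    (hW : IsOpen W) (hWn : W.Nonempty) :
    ∃ e : (ℕ → Bool) → (ℕ → Bool), BijOn e U W := by
  have key : ∀ A : Set (ℕ → Bool), IsOpen A → A.Nonempty → Nonempty ((ℕ → Bool) ↪ A) := by
    intro A hA ⟨x, hx⟩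
    obtain ⟨I, u, hu, hIu⟩ := isOpen_pi_iff.1 hA x hx
    let n := I.sup id + 1
    refine ⟨⟨fun y => ⟨fun i => if i < n then x i else y (i - n), ?_⟩, ?_⟩⟩
    · apply hIu
      intro i hi
      have : i < n := Nat.lt_succ_of_le (Finset.le_sup (f := id) hi)
      simp only [this, if_true]
      exact (hu i hi).2
    · intro y z hyz
      ext1 i
      have := congrFun (congrArg Subtype.val hyz) (i + n)
      simpa using this
  obtain ⟨a⟩ := key U hU hUn
  obtain ⟨b⟩ := key W hW hWn
  obtain ⟨e⟩ := Function.Embedding.antisymm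
    ((Function.Embedding.subtype (· ∈ U)).trans b) ((Function.Embedding.subtype (· ∈ W)).trans a)
  classical
  refine ⟨fun x => if hx : x ∈ U then (e ⟨x, hx⟩ : ℕ → Bool) else x, ?_, ?_, ?_⟩
  · intro x hx
    simp only [hx, dif_pos]
    exact (e ⟨x, hx⟩).2
  · intro x hx y hy hxy
    simp only [hx, hy, dif_pos] at hxy
    have := e.injective (Subtype.ext hxy)
    exact congrArg Subtype.val this
  · intro y hy
    refine ⟨e.symm ⟨y, hy⟩, (e.symm ⟨y, hy⟩).2, ?_⟩
    have : ((e.symm ⟨y, hy⟩ : U) : ℕ → Bool) ∈ U := (e.symm ⟨y, hy⟩).2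
    simp only [this, dif_pos]
    simp

/-- Gluing a bijection compatible with a KR-cover. -/
lemma kr_glue {E F : Set (ℕ → Bool)} {h : E ≃ₜ F} {𝒱 𝒲 : Set (Set (ℕ → Bool))}
    {ψ : Set (ℕ → Bool) → Set (ℕ → Bool)} (hc : IsKRCover E F h 𝒱 𝒲 ψ) :
    ∃ f : (ℕ → Bool) ≃ (ℕ → Bool), (∀ x : E, f x = h x) ∧ ∀ U ∈ 𝒱, f '' U = ψ U := by
  classical
  obtain ⟨⟨hV1, hV2, hV3⟩, ⟨hW1, hW2, hW3⟩, hψ, -⟩ := hc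
  have he : ∀ U, ∃ e : (ℕ → Bool) → (ℕ → Bool), U ∈ 𝒱 → BijOn e U (ψ U) := by
    intro U
    by_cases hU : U ∈ 𝒱
    · obtain ⟨e, he⟩ := kr_open_bij (hV1 U hU).1.isOpen (hV1 U hU).2
        (hW1 _ (hψ.mapsTo hU)).1.isOpen (hW1 _ (hψ.mapsTo hU)).2
      exact ⟨e, fun _ => he⟩
    · exact ⟨id, fun h => absurd h hU⟩
  choose e he using he
  have hp : ∀ x, ∃ U, x ∉ E → U ∈ 𝒱 ∧ x ∈ U := by
    intro x
    by_cases hx : x ∈ E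
    · exact ⟨∅, fun h => absurd hx h⟩
    · have : x ∈ ⋃₀ 𝒱 := hV3 ▸ hx
      obtain ⟨U, hU, hxU⟩ := this
      exact ⟨U, fun _ => ⟨hU, hxU⟩⟩
  choose p hp using hp
  have hVE : ∀ U ∈ 𝒱, ∀ x ∈ U, x ∉ E := fun U hU x hx => by
    have : x ∈ Eᶜ := hV3 ▸ mem_sUnion_of_mem hx hU
    exact this
  have hWF : ∀ U ∈ 𝒲, ∀ x ∈ U, x ∉ F := fun U hU x hx => by
    have : x ∈ Fᶜ := hW3 ▸ mem_sUnion_of_mem hx hU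
    exact this
  have hpu : ∀ U ∈ 𝒱, ∀ x ∈ U, p x = U := fun U hU x hx =>
    hV2.elim_set (hp x (hVE U hU x hx)).1 hU x (hp x (hVE U hU x hx)).2 hx
  let g : (ℕ → Bool) → (ℕ → Bool) := fun x => if hx : x ∈ E then (h ⟨x, hx⟩ : ℕ → Bool) else e (p x) x
  have gE : ∀ x : E, g x = h x := fun x => by simp [g]
  have gV : ∀ U ∈ 𝒱, ∀ x ∈ U, g x = e U x := fun U hU x hx => by
    simp [g, hVE U hU x hx, hpu U hU x hx]
  have gW : ∀ U ∈ 𝒱, ∀ x ∈ U, g x ∈ ψ U := fun U hU x hx => by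
    rw [gV U hU x hx]; exact (he U hU).mapsTo hx
  have gi : Function.Injective g := by
    intro x y hxy
    by_cases hx : x ∈ E <;> by_cases hy : y ∈ E
    · rw [gE ⟨x, hx⟩, gE ⟨y, hy⟩] at hxy
      exact congrArg Subtype.val (h.injective (Subtype.ext hxy))
    · exfalso
      obtain ⟨h1, h2⟩ := hp y hy
      apply hWF _ (hψ.mapsTo h1) _ (gW _ h1 _ h2)
      rw [← hxy, gE ⟨x, hx⟩]; exact (h ⟨x, hx⟩).2
    · exfalso
      obtain ⟨h1, h2⟩ := hp x hx
      apply hWF _ (hψ.mapsTo h1) _ (gW _ h1 _ h2)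
      rw [hxy, gE ⟨y, hy⟩]; exact (h ⟨y, hy⟩).2
    · obtain ⟨h1, h2⟩ := hp x hx
      obtain ⟨h3, h4⟩ := hp y hy
      have h5 : ψ (p x) = ψ (p y) := hW2.elim_set (hψ.mapsTo h1) (hψ.mapsTo h3) (g x)
        (gW _ h1 _ h2) (hxy ▸ gW _ h3 _ h4)
      have h6 := hψ.injOn h1 h3 h5
      rw [← h6] at h4
      rw [gV _ h1 _ h2, gV _ h1 _ h4] at hxy
      exact (he _ h1).injOn h2 h4 hxy
  have gon : ∀ U ∈ 𝒱, g '' U = ψ U := by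
    intro U hU
    rw [← (he U hU).image_eq]
    exact image_congr (gV U hU)
  have gs : Function.Surjective g := by
    intro y
    by_cases hy : y ∈ F
    · exact ⟨h.symm ⟨y, hy⟩, by rw [gE]; simp⟩
    · have : y ∈ ⋃₀ 𝒲 := hW3 ▸ hy
      obtain ⟨W, hW, hyW⟩ := this
      obtain ⟨U, hU, rfl⟩ := hψ.surjOn hW
      rw [← gon U hU] at hyW
      obtain ⟨x, -, hx⟩ := hyW
      exact ⟨x, hx⟩
  exact ⟨Equiv.ofBijective g ⟨gi, gs⟩, gE, gon⟩

lemma kr_small (m : MetricSpace (ℕ → Bool))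
    (hm : m.toPseudoMetricSpace.toUniformSpace.toTopologicalSpace
        = (inferInstance : TopologicalSpace (ℕ → Bool))) (x : ℕ → Bool) (N : Set (ℕ → Bool))
    (hN : N ∈ 𝓝 x) : ∃ n : ℕ, ∀ U : Set (ℕ → Bool),
      @Metric.diam _ m.toPseudoMetricSpace U ≤ (2 : ℝ)⁻¹ ^ n → x ∈ U → U ⊆ N := by
  have hN' : N ∈ @nhds _ m.toPseudoMetricSpace.toUniformSpace.toTopologicalSpace x := by
    rw [hm]; exact hN
  have hc : @CompactSpace _ m.toPseudoMetricSpace.toUniformSpace.toTopologicalSpace := by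
    rw [hm]; infer_instance
  obtain ⟨ε, hε, hb⟩ := (@Metric.mem_nhds_iff _ m.toPseudoMetricSpace _ _).1 hN'
  obtain ⟨n, hn⟩ := exists_pow_lt_of_lt_one hε (by norm_num : (2 : ℝ)⁻¹ < 1)
  refine ⟨n, fun U hU hx y hy => hb ?_⟩
  have hbd : @Bornology.IsBounded _ (@PseudoMetricSpace.toBornology _ m.toPseudoMetricSpace) U :=
    @Bornology.IsBounded.subset _ (@PseudoMetricSpace.toBornology _ m.toPseudoMetricSpace) _ _
      (@IsCompact.isBounded _ m.toPseudoMetricSpace _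
        (@CompactSpace.isCompact_univ _ _ hc)) (subset_univ _)
  have := @Metric.dist_le_diam_of_mem _ U y x m.toPseudoMetricSpace hbd hy hx
  exact lt_of_le_of_lt (this.trans hU) hn

lemma kr_lim (u : ℕ → (ℕ → Bool)) : ∃ y, ∀ (C : Set (ℕ → Bool)) (n : ℕ), IsClosed C →
    (∀ k, n ≤ k → u k ∈ C) → y ∈ C := by
  obtain ⟨y, -, hy⟩ := isCompact_univ (X := ℕ → Bool) (f := map u atTop) (by simp)
  refine ⟨y, fun C n hC h => ?_⟩
  have : C ∈ map u atTop := by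
    exact mem_map.2 (mem_of_superset (eventually_ge_atTop n) h)
  exact hC.closure_eq ▸ hy.mem_closure_of_mem C this

/-- If `⟨⟨h_n, K_n⟩ : n ∈ ω⟩` is a Knaster-Reichbach system on the Cantor set
`2^ω` (with respect to an admissible metric), then there exists a homeomorphism
`H : 2^ω → 2^ω` extending `⋃_{n∈ω} h_n`. -/
theorem statement8 (m : MetricSpace (ℕ → Bool))
    (hm : m.toPseudoMetricSpace.toUniformSpace.toTopologicalSpace
        = (inferInstance : TopologicalSpace (ℕ → Bool)))
    (E F : ℕ → Set (ℕ → Bool)) (h : ∀ n, E n ≃ₜ F n)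
    (𝒱 𝒲 : ℕ → Set (Set (ℕ → Bool)))
    (ψ : ℕ → Set (ℕ → Bool) → Set (ℕ → Bool))
    (hsys : IsKRSystem m E F h 𝒱 𝒲 ψ) :
    ∃ H : (ℕ → Bool) ≃ₜ (ℕ → Bool),
      ∀ (n : ℕ) (x : ℕ → Bool) (hx : x ∈ E n),
        H x = (((h n) ⟨x, hx⟩ : F n) : ℕ → Bool) := by
  obtain ⟨hcl, hE, hh, hcov, hdV, hdW, hrV, hrW, hψ⟩ := hsys
  have hg := fun n => kr_glue (hcov n)
  choose f fE fV using hg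
  have hVE : ∀ n, ∀ U ∈ 𝒱 n, ∀ x ∈ U, x ∉ E n := fun n U hU x hx => by
    have : x ∈ (E n)ᶜ := (hcov n).1.2.2 ▸ mem_sUnion_of_mem hx hU
    exact this
  have hWF : ∀ n, ∀ U ∈ 𝒲 n, ∀ x ∈ U, x ∉ F n := fun n U hU x hx => by
    have : x ∈ (F n)ᶜ := (hcov n).2.1.2.2 ▸ mem_sUnion_of_mem hx hU
    exact this
  have hpV : ∀ n x, x ∉ E n → ∃ U ∈ 𝒱 n, x ∈ U := fun n x hx => by
    have : x ∈ ⋃₀ 𝒱 n := (hcov n).1.2.2 ▸ hx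
    exact this
  have hpW : ∀ n y, y ∉ F n → ∃ U ∈ 𝒱 n, y ∈ ψ n U := fun n y hy => by
    have : y ∈ ⋃₀ 𝒲 n := (hcov n).2.1.2.2 ▸ hy
    obtain ⟨W, hW, hyW⟩ := this
    obtain ⟨U, hU, rfl⟩ := (hcov n).2.2.1.surjOn hW
    exact ⟨U, hU, hyW⟩
  have hψW : ∀ n, ∀ U ∈ 𝒱 n, ψ n U ∈ 𝒲 n := fun n U hU => (hcov n).2.2.1.mapsTo hU
  have hVcl : ∀ n, ∀ U ∈ 𝒱 n, IsClopen U := fun n U hU => ((hcov n).1.1 U hU).1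
  have hWcl : ∀ n, ∀ U ∈ 𝒱 n, IsClopen (ψ n U) := fun n U hU =>
    ((hcov n).2.1.1 _ (hψW n U hU)).1
  have fE' : ∀ n k, n ≤ k → ∀ x (hx : x ∈ E n), f k x = h n ⟨x, hx⟩ := by
    intro n k hk x hx
    rw [fE k ⟨x, hE n k hk hx⟩]
    exact (hh n k hk x hx _).symm
  -- off `E k` the map `f k` respects the coarser partition
  have f1 : ∀ n k, n ≤ k → ∀ V ∈ 𝒱 n, ∀ x ∈ V, x ∉ E k → f k x ∈ ψ n V := by
    intro n k hk V hV x hx hxE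
    obtain ⟨U, hU, hxU⟩ := hpV k x hxE
    obtain ⟨V', hV', hUV⟩ := hrV k n hk U hU
    have : V' = V := (hcov n).1.2.1.elim_set hV' hV x (hUV hxU) hx
    subst this
    exact (hψ k n hk U hU V' hV').1 hUV (fV k U hU ▸ mem_image_of_mem _ hxU)
  have f2 : ∀ n k, n ≤ k → ∀ V ∈ 𝒱 n, ∀ x ∈ V, f k x ∈ ψ n V := by
    intro n k hk V hV x hx
    by_cases hxE : x ∈ E k
    · by_contra hcon
      have hcont := ((hcov k).2.2.2 (f k) (fE k) (fV k)).1 x hxE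
      have h1 : (f k) ⁻¹' (ψ n V)ᶜ ∈ 𝓝 x :=
        hcont ((hWcl n V hV).isClosed.isOpen_compl.mem_nhds hcon)
      have h2 : V ∈ 𝓝 x := (hVcl n V hV).isOpen.mem_nhds hx
      have h3 : interior (E k) = ∅ := by
        have := (hcl k).2.1
        rwa [IsNowhereDense, (hcl k).1.closure_eq] at this
      have h4 : ¬ ((f k) ⁻¹' (ψ n V)ᶜ ∩ V ⊆ E k) := fun hs => by
        have : x ∈ interior (E k) := mem_interior_iff_mem_nhds.2 (mem_of_superset (inter_mem h1 h2) hs)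
        rw [h3] at this; exact this
      obtain ⟨z, ⟨hz1, hz2⟩, hz3⟩ := not_subset.1 h4
      exact hz1 (f1 n k hk V hV z hz2 hz3)
    · exact f1 n k hk V hV x hx hxE
  have f3 : ∀ n k, n ≤ k → ∀ V ∈ 𝒱 n, ∀ y ∈ ψ n V, (f k).symm y ∈ V := by
    intro n k hk V hV y hy
    obtain ⟨x, rfl⟩ := (f k).surjective y
    rw [Equiv.symm_apply_apply]
    by_cases hx : x ∈ E n
    · exfalso
      apply hWF n _ (hψW n V hV) _ hy
      rw [fE' n k hk x hx]; exact (h n ⟨x, hx⟩).2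
    · obtain ⟨V', hV', hxV⟩ := hpV n x hx
      have h1 := (hcov n).2.1.2.1.elim_set (hψW n V' hV') (hψW n V hV) _ (f2 n k hk V' hV' x hxV) hy
      rwa [← (hcov n).2.2.1.injOn hV' hV h1]
  choose H hH using fun x => kr_lim (fun k => f k x)
  choose G hG using fun y => kr_lim (fun k => (f k).symm y)
  have HE : ∀ n x (hx : x ∈ E n), H x = h n ⟨x, hx⟩ := fun n x hx =>
    hH x {(h n ⟨x, hx⟩ : ℕ → Bool)} n isClosed_singleton (fun k hk => fE' n k hk x hx)
  have GE : ∀ n x (hx : x ∈ E n), G (h n ⟨x, hx⟩) = x := fun n x hx =>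
    hG (h n ⟨x, hx⟩) {x} n isClosed_singleton (fun k hk => by
      rw [← fE' n k hk x hx]; simp)
  have HV : ∀ n, ∀ V ∈ 𝒱 n, ∀ x ∈ V, H x ∈ ψ n V := fun n V hV x hx =>
    hH x _ n (hWcl n V hV).isClosed (fun k hk => f2 n k hk V hV x hx)
  have GV : ∀ n, ∀ V ∈ 𝒱 n, ∀ y ∈ ψ n V, G y ∈ V := fun n V hV y hy =>
    hG y _ n (hVcl n V hV).isClosed (fun k hk => f3 n k hk V hV y hy)
  have hsep : ∀ x y : ℕ → Bool, (∀ n, ∃ U : Set (ℕ → Bool),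
      @Metric.diam _ m.toPseudoMetricSpace U ≤ (2 : ℝ)⁻¹ ^ n ∧ x ∈ U ∧ y ∈ U) → y = x := by
    intro x y hxy
    by_contra hne
    obtain ⟨n, hn⟩ := kr_small m hm x {y}ᶜ (isOpen_compl_singleton.mem_nhds (Ne.symm hne))
    obtain ⟨U, hU, hx, hy⟩ := hxy n
    exact hn U hU hx hy rfl
  have GH : ∀ x, G (H x) = x := by
    intro x
    by_cases hx : ∃ n, x ∈ E n
    · obtain ⟨n, hx⟩ := hx
      rw [HE n x hx, GE]
    · push Not at hx
      apply hsep
      intro n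
      obtain ⟨V, hV, hxV⟩ := hpV n x (hx n)
      exact ⟨V, hdV n V hV, hxV, GV n V hV _ (HV n V hV x hxV)⟩
  have HG : ∀ y, H (G y) = y := by
    intro y
    by_cases hy : ∃ n, y ∈ F n
    · obtain ⟨n, hy⟩ := hy
      obtain ⟨⟨x, hx⟩, hxy⟩ := (h n).surjective ⟨y, hy⟩
      have : y = h n ⟨x, hx⟩ := by rw [hxy]
      rw [this, GE, HE n x hx]
    · push Not at hy
      apply hsep
      intro n
      obtain ⟨V, hV, hyV⟩ := hpW n y (hy n)
      exact ⟨ψ n V, hdW n _ (hψW n V hV), hyV, HV n V hV _ (GV n V hV y hyV)⟩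
  let e : (ℕ → Bool) ≃ (ℕ → Bool) := ⟨H, G, GH, HG⟩
  have heV : ∀ n, ∀ V ∈ 𝒱 n, e '' V = ψ n V := by
    intro n V hV
    apply Subset.antisymm
    · rintro _ ⟨x, hx, rfl⟩
      exact HV n V hV x hx
    · intro y hy
      exact ⟨G y, GV n V hV y hy, HG y⟩
  have hcont : Continuous e := by
    rw [continuous_iff_continuousAt]
    intro x
    by_cases hx : ∃ n, x ∈ E n
    · obtain ⟨n, hx⟩ := hx
      exact ((hcov n).2.2.2 e (fun x => HE n x x.2) (heV n)).1 x hx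
    · push Not at hx
      intro N hN
      obtain ⟨n, hn⟩ := kr_small m hm (e x) N hN
      obtain ⟨V, hV, hxV⟩ := hpV n x (hx n)
      have hs := hn (ψ n V) (hdW n _ (hψW n V hV)) (HV n V hV x hxV)
      exact mem_map.2 <| mem_of_superset ((hVcl n V hV).isOpen.mem_nhds hxV) (fun z hz => hs (HV n V hV z hz))
  exact ⟨hcont.homeoOfEquivCompactToT2, fun n x hx => HE n x hx⟩
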